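/- arXiv:2010.06236 — 2 statements merged into one kernel-verified Lean document; each statement's English description precedes it below -/
import Mathlib

section
/- If the gain L ∈ ℝ^{m×n} is admissible, then the stochastic Lyapunov equation P = 𝒯_L^*(P) + Q + Lᵀ R L has a unique solution P among n×n real matrices; this P is symmetric positive semidefinite and is given by the convergent series P = Σ_{t=0}^∞ (𝒯_L^*)^t(Q + Lᵀ R L). -/
open Matrix Filter Topology

/-- The sandwich map `X ↦ M * X * Mᵀ` as a linear endomorphism of `n × n` real matrices. -/
noncomputable def sandwich {n : ℕ} (M : Matrix (Fin n) (Fin n) ℝ) :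
    Module.End ℝ (Matrix (Fin n) (Fin n) ℝ) :=
  (LinearMap.mulLeft ℝ M).comp (LinearMap.mulRight ℝ Mᵀ)

/-- The closed-loop covariance operator
`𝒯_L(X) = (A+BL) X (A+BL)ᵀ + Σᵢ ᾱᵢ Aᵢ X Aᵢᵀ + Σⱼ β̄ⱼ (BⱼL) X (BⱼL)ᵀ`. -/
noncomputable def calT {n m p q : ℕ}
    (A : Matrix (Fin n) (Fin n) ℝ) (A' : Fin p → Matrix (Fin n) (Fin n) ℝ)
    (B : Matrix (Fin n) (Fin m) ℝ) (B' : Fin q → Matrix (Fin n) (Fin m) ℝ)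
    (al : Fin p → ℝ) (be : Fin q → ℝ) (L : Matrix (Fin m) (Fin n) ℝ) :
    Module.End ℝ (Matrix (Fin n) (Fin n) ℝ) :=
  sandwich (A + B * L) + ∑ i, al i • sandwich (A' i) + ∑ j, be j • sandwich (B' j * L)

/-- The (trace-)adjoint operator
`𝒯_L^*(P) = (A+BL)ᵀ P (A+BL) + Σᵢ ᾱᵢ Aᵢᵀ P Aᵢ + Σⱼ β̄ⱼ Lᵀ Bⱼᵀ P Bⱼ L`. -/
noncomputable def calTstar {n m p q : ℕ}
    (A : Matrix (Fin n) (Fin n) ℝ) (A' : Fin p → Matrix (Fin n) (Fin n) ℝ)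
    (B : Matrix (Fin n) (Fin m) ℝ) (B' : Fin q → Matrix (Fin n) (Fin m) ℝ)
    (al : Fin p → ℝ) (be : Fin q → ℝ) (L : Matrix (Fin m) (Fin n) ℝ) :
    Module.End ℝ (Matrix (Fin n) (Fin n) ℝ) :=
  sandwich (A + B * L)ᵀ + ∑ i, al i • sandwich (A' i)ᵀ + ∑ j, be j • sandwich (B' j * L)ᵀ

/-- A gain `L` is admissible if the spectral radius of `𝒯_L`, as a linear endomorphism of
the space of `n × n` real matrices, is strictly less than `1`. -/
noncomputable def Admissible {n m p q : ℕ}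
    (A : Matrix (Fin n) (Fin n) ℝ) (A' : Fin p → Matrix (Fin n) (Fin n) ℝ)
    (B : Matrix (Fin n) (Fin m) ℝ) (B' : Fin q → Matrix (Fin n) (Fin m) ℝ)
    (al : Fin p → ℝ) (be : Fin q → ℝ) (L : Matrix (Fin m) (Fin n) ℝ) : Prop :=
  spectralRadius ℝ (calT A A' B B' al be L) < 1

/-!
Since `spectralRadius ℝ` sees only the real spectrum, admissibility does not directly give decay of
the powers of `𝒯_L`. What it does give is that `1 - s • 𝒯_L`, hence by duality `1 - s • 𝒯_L^*`, is
invertible for every `s ∈ [0, 1]`. The operator `𝒯_L^*` maps the cone `K` of matrices with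
nonnegative quadratic form into itself, and invertibility along this segment makes
`(1 - 𝒯_L^*)⁻¹` preserve `K`: for `e` interior to `K`, the point `w s = (1 - s • 𝒯_L^*)⁻¹ e`
satisfies `w s = s • 𝒯_L^* (w s) + e`, so whenever it lies in `K` it lies in the interior of `K`,
and connectedness of `[0, 1]` carries membership from `w 0 = e` to `w 1`. The solution `P` therefore
dominates every partial sum `P - (𝒯_L^*)^N P` of the series, which bounds the series of nonnegative
terms obtained from each quadratic form, and polarization recovers the entries.
-/

section Resolvent

theorem isUnit_one_sub_smul_of_spectralRadius_lt_one {𝕜 A : Type*} [NormedField 𝕜] [Ring A]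
    [Algebra 𝕜 A] {a : A} (ha : spectralRadius 𝕜 a < 1) {z : 𝕜} (hz : ‖z‖ ≤ 1) :
    IsUnit (1 - z • a) := by
  rcases eq_or_ne z 0 with rfl | hz0
  · simp only [zero_smul, sub_zero, isUnit_one]
  have hinv : spectralRadius 𝕜 a < ‖z⁻¹‖₊ := by
    refine ha.trans_le (ENNReal.one_le_coe_iff.2 ?_)
    rw [nnnorm_inv]
    exact (one_le_inv₀ (nnnorm_pos.2 hz0)).2 hz
  have hres : IsUnit ((Units.mk0 z hz0)⁻¹ • (1 : A) - a) := by
    rw [Units.smul_def, ← Algebra.algebraMap_eq_smul_one]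
    exact spectrum.mem_resolventSet_of_spectralRadius_lt hinv
  rwa [IsUnit.smul_sub_iff_sub_inv_smul, inv_inv] at hres

theorem isUnit_of_isAdjointPair {𝕜 V : Type*} [Field 𝕜] [AddCommGroup V] [Module 𝕜 V]
    [FiniteDimensional 𝕜 V] {B : LinearMap.BilinForm 𝕜 V} (hB : B.SeparatingRight)
    {f g : Module.End 𝕜 V} (hfg : LinearMap.IsAdjointPair B B f g) (hf : IsUnit f) : IsUnit g := by
  rw [LinearMap.isUnit_iff_ker_eq_bot, LinearMap.ker_eq_bot']
  intro y hy
  refine hB y fun z => ?_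
  obtain ⟨x, rfl⟩ := ((Module.End.isUnit_iff f).1 hf).surjective z
  rw [hfg, hy, map_zero]

theorem existsUnique_eq_apply_add {R M : Type*} [Ring R] [AddCommGroup M] [Module R M]
    {f : Module.End R M} (hf : IsUnit (1 - f)) (c : M) : ∃! p, p = f p + c := by
  have hiff (p : M) : (1 - f) p = c ↔ p = f p + c := sub_eq_iff_eq_add'
  simpa only [hiff] using ((Module.End.isUnit_iff _).1 hf).existsUnique c

theorem sum_range_pow_apply_of_eq_apply_add {R M : Type*} [Ring R] [AddCommGroup M] [Module R M]
    {f : Module.End R M} {p c : M} (hp : p = f p + c) (N : ℕ) :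
    ∑ t ∈ Finset.range N, (f ^ t) c = p - (f ^ N) p := by
  have hc : c = (1 - f) p := (sub_eq_iff_eq_add'.2 hp).symm
  rw [← LinearMap.sum_apply, hc, ← Module.End.mul_apply, geom_sum_mul_neg]
  rfl

theorem eq_apply_add_of_hasSum_pow_apply {R M : Type*} [Ring R] [AddCommGroup M] [Module R M]
    [TopologicalSpace M] [T2Space M] [ContinuousAdd M] {f : Module.End R M} (hf : Continuous f)
    {c p : M} (hp : HasSum (fun t : ℕ => (f ^ t) c) p) : p = f p + c := by
  have hshift : HasSum (fun t : ℕ => (f ^ (t + 1)) c) (f p) := by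
    simpa only [Function.comp_def, pow_succ', Module.End.mul_apply] using hp.map f hf
  have htail : HasSum (fun t : ℕ => (f ^ t) c) (c + f p) :=
    HasSum.zero_add (f := fun t : ℕ => (f ^ t) c) hshift
  rw [add_comm]
  exact hp.unique htail

end Resolvent

section InvariantCone

open scoped Pointwise in
theorem add_mem_interior {S E : Type*} [TopologicalSpace E] [AddGroup E] [ContinuousConstVAdd E E]
    [SetLike S E] [AddMemClass S E] {K : S} {x y : E} (hx : x ∈ K)
    (hy : y ∈ interior (K : Set E)) : x + y ∈ interior (K : Set E) := by
  have hsub : (K : Set E) + (K : Set E) ⊆ K :=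
    Set.add_subset_iff.2 fun _ ha _ hb => add_mem ha hb
  exact interior_mono hsub (subset_interior_add_right (Set.add_mem_add hx hy))

theorem summable_apply_pow_apply {E : Type*} [AddCommGroup E] [Module ℝ E] {K : Set E}
    {f : Module.End ℝ E} (hf : Set.MapsTo f K K) {p c : E} (hp : p = f p + c) (hpK : p ∈ K)
    (hcK : c ∈ K) {φ : E →ₗ[ℝ] ℝ} (hφ : ∀ x ∈ K, 0 ≤ φ x) :
    Summable fun t : ℕ => φ ((f ^ t) c) := by
  have hpow (t : ℕ) : Set.MapsTo (f ^ t) K K := by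
    simpa only [Module.End.coe_pow] using hf.iterate t
  refine summable_of_sum_range_le (c := φ p) (fun t => hφ _ (hpow t hcK)) fun N => ?_
  rw [← map_sum, sum_range_pow_apply_of_eq_apply_add hp, map_sub]
  exact sub_le_self _ (hφ _ (hpow N hpK))

variable {E : Type*} [NormedAddCommGroup E] [NormedSpace ℝ E] {K : ProperCone ℝ E}
  {f : E →L[ℝ] E}

theorem continuousAt_inverse_one_sub_smul [CompleteSpace E] {s : ℝ} (hs : IsUnit (1 - s • f)) :
    ContinuousAt (fun r : ℝ => Ring.inverse (1 - r • f)) s := by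
  obtain ⟨u, hu⟩ := hs
  have hinv : ContinuousAt Ring.inverse (1 - s • f) := hu ▸ NormedRing.inverse_continuousAt u
  exact ContinuousAt.comp (f := fun r : ℝ => 1 - r • f) hinv (by fun_prop)

theorem inverse_one_sub_apply_mem_of_mem_interior [CompleteSpace E] (hf : Set.MapsTo f K K)
    (hunit : ∀ s ∈ Set.Icc (0 : ℝ) 1, IsUnit (1 - s • f)) {e : E}
    (he : e ∈ interior (K : Set E)) : Ring.inverse (1 - f) e ∈ K := by
  let w (s : ℝ) : E := Ring.inverse (1 - s • f) e
  have hw_eq (s : ℝ) (hs : s ∈ Set.Icc (0 : ℝ) 1) : w s = s • f (w s) + e := by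
    have h := DFunLike.congr_fun (Ring.mul_inverse_cancel _ (hunit s hs)) e
    exact sub_eq_iff_eq_add'.1 h
  have hw_cont (s : ℝ) (hs : s ∈ Set.Icc (0 : ℝ) 1) : ContinuousAt w s :=
    (continuousAt_inverse_one_sub_smul (hunit s hs)).clm_apply continuousAt_const
  have hw_interior (s : ℝ) (hs : s ∈ Set.Icc (0 : ℝ) 1) (hsK : w s ∈ K) :
      w s ∈ interior (K : Set E) := by
    rw [hw_eq s hs]
    exact add_mem_interior (K.smul_mem (hf hsK) hs.1) he
  have hw_mem : Set.Icc (0 : ℝ) 1 ⊆ w ⁻¹' K := by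
    refine IsClosed.Icc_subset_of_forall_mem_nhdsWithin ?_ ?_ ?_
    · rw [Set.inter_comm]
      have hw : ContinuousOn w (Set.Icc 0 1) := fun s hs => (hw_cont s hs).continuousWithinAt
      exact hw.preimage_isClosed_of_isClosed isClosed_Icc K.isClosed
    · simpa [w] using interior_subset he
    · rintro s ⟨hsK, hs⟩
      have hs' := Set.Ico_subset_Icc_self hs
      exact mem_nhdsWithin_of_mem_nhds
        (hw_cont s hs' (mem_interior_iff_mem_nhds.1 (hw_interior s hs' hsK)))
  simpa only [w, Set.mem_preimage, one_smul, SetLike.mem_coe] using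
    hw_mem (Set.right_mem_Icc.2 zero_le_one)

theorem mapsTo_inverse_one_sub [CompleteSpace E] (hK : (interior (K : Set E)).Nonempty)
    (hf : Set.MapsTo f K K) (hunit : ∀ s ∈ Set.Icc (0 : ℝ) 1, IsUnit (1 - s • f)) :
    Set.MapsTo ⇑(Ring.inverse (1 - f)) (K : Set E) K := by
  have hdense : closure (interior (K : Set E)) = K :=
    (K.convex.closure_interior_eq_closure_of_nonempty_interior hK).trans K.isClosed.closure_eq
  have hint : Set.MapsTo ⇑(Ring.inverse (1 - f)) (interior (K : Set E)) K := fun _ he =>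
    inverse_one_sub_apply_mem_of_mem_interior hf hunit he
  simpa only [hdense, K.isClosed.closure_eq] using hint.closure (ContinuousLinearMap.continuous _)

theorem mem_properCone_of_eq_apply_add [FiniteDimensional ℝ E]
    (hK : (interior (K : Set E)).Nonempty) {f : Module.End ℝ E} (hf : Set.MapsTo f K K)
    (hunit : ∀ s ∈ Set.Icc (0 : ℝ) 1, IsUnit (1 - s • f)) {p c : E} (hp : p = f p + c)
    (hc : c ∈ K) : p ∈ K := by
  have := FiniteDimensional.complete ℝ E
  let F : E →L[ℝ] E := Module.End.toContinuousLinearMap E f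
  have hunitF (s : ℝ) (hs : s ∈ Set.Icc (0 : ℝ) 1) : IsUnit (1 - s • F) := by
    simpa only [map_sub, map_one, map_smul] using
      (hunit s hs).map (Module.End.toContinuousLinearMap (𝕜 := ℝ) E)
  have hpF : (1 - F) p = c := sub_eq_iff_eq_add'.2 hp
  have hp_inv : Ring.inverse (1 - F) c = p := by
    have hunit_one : IsUnit (1 - F) := by simpa only [one_smul] using hunitF 1 (by simp)
    rw [← hpF]
    exact DFunLike.congr_fun (Ring.inverse_mul_cancel _ hunit_one) p
  exact hp_inv ▸ mapsTo_inverse_one_sub hK hf hunitF hc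

end InvariantCone

section AccretiveCone

variable {n : Type*} [Fintype n]

/-- Evaluation `X ↦ xᵀ X x` of the quadratic form of a matrix at the vector `x`, as a continuous
linear functional of the matrix. -/
def quadFormEval (x : n → ℝ) : Matrix n n ℝ →L[ℝ] ℝ where
  toFun X := x ⬝ᵥ X *ᵥ x
  map_add' X Y := by rw [add_mulVec, dotProduct_add]
  map_smul' c X := by rw [smul_mulVec, dotProduct_smul, RingHom.id_apply]
  cont := by fun_prop

theorem quadFormEval_apply (x : n → ℝ) (X : Matrix n n ℝ) : quadFormEval x X = x ⬝ᵥ X *ᵥ x :=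
  rfl

variable (n) in
/-- The accretive matrices, those with nonnegative quadratic form. Symmetry is not required, so
that, unlike the cone of positive semidefinite matrices, this cone has nonempty interior in the
space of all square matrices. -/
def accretiveCone : ProperCone ℝ (Matrix n n ℝ) :=
  ⨅ x, (ProperCone.positive ℝ ℝ).comap (quadFormEval x)

theorem mem_accretiveCone {X : Matrix n n ℝ} :
    X ∈ accretiveCone n ↔ ∀ x, 0 ≤ quadFormEval x X :=
  ClosedSubmodule.mem_iInf

theorem posSemidef_iff_isSymm_and_mem_accretiveCone {X : Matrix n n ℝ} :
    X.PosSemidef ↔ X.IsSymm ∧ X ∈ accretiveCone n := by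
  rw [posSemidef_iff_dotProduct_mulVec, mem_accretiveCone, IsHermitian,
    conjTranspose_eq_transpose_of_trivial]
  rfl

section L2Operator

open scoped Matrix.Norms.L2Operator

theorem abs_quadFormEval_le [DecidableEq n] (x : n → ℝ) (X : Matrix n n ℝ) :
    |quadFormEval x X| ≤ ‖X‖ * (x ⬝ᵥ x) := by
  let v : EuclideanSpace ℝ n := WithLp.toLp 2 x
  have hinner : quadFormEval x X = inner ℝ (WithLp.toLp 2 (X *ᵥ x)) v := rfl
  have hnorm : ‖v‖ * ‖v‖ = x ⬝ᵥ x := (real_inner_self_eq_norm_mul_norm v).symm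
  calc |quadFormEval x X| ≤ ‖WithLp.toLp 2 (X *ᵥ x)‖ * ‖v‖ := hinner ▸ abs_real_inner_le_norm _ _
    _ ≤ ‖X‖ * ‖v‖ * ‖v‖ := by gcongr; exact X.l2_opNorm_mulVec v
    _ = ‖X‖ * (x ⬝ᵥ x) := by rw [mul_assoc, hnorm]

theorem one_mem_interior_accretiveCone [DecidableEq n] :
    1 ∈ interior (accretiveCone n : Set (Matrix n n ℝ)) := by
  refine mem_interior.2 ⟨Metric.ball 1 1, fun X hX => mem_accretiveCone.2 fun x => ?_,
    Metric.isOpen_ball, Metric.mem_ball_self one_pos⟩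
  have hdist : ‖X - 1‖ ≤ 1 := (mem_ball_iff_norm.1 hX).le
  have hone : quadFormEval x 1 = x ⬝ᵥ x := by rw [quadFormEval_apply, one_mulVec]
  have hdiff : |quadFormEval x X - x ⬝ᵥ x| ≤ x ⬝ᵥ x := by
    rw [← hone, ← map_sub, hone]
    exact (abs_quadFormEval_le x _).trans
      (mul_le_of_le_one_left (dotProduct_self_star_nonneg x) hdist)
  linarith [neg_le_of_abs_le hdiff]

theorem mem_accretiveCone_of_eq_apply_add {f : Module.End ℝ (Matrix n n ℝ)}
    (hf : Set.MapsTo f (accretiveCone n) (accretiveCone n))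
    (hunit : ∀ s ∈ Set.Icc (0 : ℝ) 1, IsUnit (1 - s • f)) {P C : Matrix n n ℝ}
    (hP : P = f P + C) (hC : C ∈ accretiveCone n) : P ∈ accretiveCone n := by
  classical
  exact mem_properCone_of_eq_apply_add ⟨1, one_mem_interior_accretiveCone⟩ hf hunit hP hC

end L2Operator

theorem apply_eq_polarization [DecidableEq n] {X : Matrix n n ℝ} (hX : X.IsSymm) (i j : n) :
    X i j = (quadFormEval (Pi.single i 1 + Pi.single j 1) X - quadFormEval (Pi.single i 1) X
      - quadFormEval (Pi.single j 1) X) / 2 := by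
  have hji : X j i = X i j := hX.apply i j
  simp only [quadFormEval_apply, mulVec_add, add_dotProduct, dotProduct_add,
    single_one_dotProduct, mulVec_single_one, col_apply, hji]
  ring

theorem summable_of_summable_quadFormEval {ι : Type*} {X : ι → Matrix n n ℝ}
    (hX : ∀ t, (X t).IsSymm) (hsum : ∀ x, Summable fun t => quadFormEval x (X t)) :
    Summable X := by
  classical
  refine Pi.summable.2 fun i => Pi.summable.2 fun j => ?_
  simp only [fun t => apply_eq_polarization (hX t) i j]
  exact (((hsum _).sub (hsum _)).sub (hsum _)).div_const 2

end AccretiveCone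

section LyapunovEquation

theorem isSymm_pow_apply {n : Type*} {f : Module.End ℝ (Matrix n n ℝ)}
    (hsymm : ∀ X, f Xᵀ = (f X)ᵀ) {C : Matrix n n ℝ} (hC : C.IsSymm) (t : ℕ) :
    ((f ^ t) C).IsSymm := by
  induction t with
  | zero => exact hC
  | succ t ih => rw [pow_succ', Module.End.mul_apply, IsSymm, ← hsymm, ih]

variable {n : Type*} [Fintype n] {f : Module.End ℝ (Matrix n n ℝ)}
  (hf : Set.MapsTo f (accretiveCone n) (accretiveCone n)) (hsymm : ∀ X, f Xᵀ = (f X)ᵀ)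
  (hunit : ∀ s ∈ Set.Icc (0 : ℝ) 1, IsUnit (1 - s • f)) {P C : Matrix n n ℝ}
  (hP : P = f P + C) (hC : C.PosSemidef)

include hf hsymm hunit hP hC

theorem hasSum_pow_apply_of_eq_apply_add : HasSum (fun t : ℕ => (f ^ t) C) P := by
  obtain ⟨hCsymm, hCK⟩ := posSemidef_iff_isSymm_and_mem_accretiveCone.1 hC
  have hPK := mem_accretiveCone_of_eq_apply_add hf hunit hP hCK
  have hsummable : Summable fun t : ℕ => (f ^ t) C :=
    summable_of_summable_quadFormEval (isSymm_pow_apply hsymm hCsymm) fun x =>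
      summable_apply_pow_apply (φ := (quadFormEval x).toLinearMap) hf hP hPK hCK
        fun _ hX => mem_accretiveCone.1 hX x
  obtain ⟨S, hS⟩ := hsummable
  have hS_eq := eq_apply_add_of_hasSum_pow_apply f.continuous_of_finiteDimensional hS
  have hunit_one : IsUnit (1 - f) := by simpa only [one_smul] using hunit 1 (by simp)
  rwa [(existsUnique_eq_apply_add hunit_one C).unique hP hS_eq]

theorem posSemidef_of_eq_apply_add : P.PosSemidef := by
  obtain ⟨hCsymm, hCK⟩ := posSemidef_iff_isSymm_and_mem_accretiveCone.1 hC
  have hS := hasSum_pow_apply_of_eq_apply_add hf hsymm hunit hP hC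
  have hPsymm : P.IsSymm := hS.matrix_transpose.unique <| by
    simpa only [(isSymm_pow_apply hsymm hCsymm _).eq] using hS
  exact posSemidef_iff_isSymm_and_mem_accretiveCone.2
    ⟨hPsymm, mem_accretiveCone_of_eq_apply_add hf hunit hP hCK⟩

end LyapunovEquation

section FrobeniusForm

variable (n : Type*) [Fintype n]

/-- The trace pairing `⟨X, Y⟩ = tr (Xᵀ Y)`, with respect to which `𝒯_L^*` is the adjoint of
`𝒯_L`. -/
def frobeniusForm : LinearMap.BilinForm ℝ (Matrix n n ℝ) :=
  LinearMap.mk₂ ℝ (fun X Y => (Xᵀ * Y).trace)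
    (fun X X' Y => by rw [transpose_add, add_mul, trace_add])
    (fun c X Y => by rw [transpose_smul, smul_mul, trace_smul])
    (fun X Y Y' => by rw [mul_add, trace_add])
    (fun c X Y => by rw [Matrix.mul_smul, trace_smul])

theorem separatingRight_frobeniusForm : (frobeniusForm n).SeparatingRight := fun Y hY => by
  refine trace_conjTranspose_mul_self_eq_zero_iff.1 ?_
  rw [conjTranspose_eq_transpose_of_trivial]
  exact hY Y

end FrobeniusForm

section Sandwich

variable {n : ℕ}

theorem sandwich_apply (M X : Matrix (Fin n) (Fin n) ℝ) : sandwich M X = M * X * Mᵀ :=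
  (Matrix.mul_assoc M X Mᵀ).symm

theorem sandwich_transpose_apply (M X : Matrix (Fin n) (Fin n) ℝ) :
    sandwich M Xᵀ = (sandwich M X)ᵀ := by
  simp only [sandwich_apply, transpose_mul, transpose_transpose, Matrix.mul_assoc]

theorem quadFormEval_sandwich (M X : Matrix (Fin n) (Fin n) ℝ) (x : Fin n → ℝ) :
    quadFormEval x (sandwich M X) = quadFormEval (Mᵀ *ᵥ x) X := by
  simp only [quadFormEval_apply, sandwich_apply, ← mulVec_mulVec, dotProduct_mulVec x,
    mulVec_transpose]

theorem mapsTo_sandwich_accretiveCone (M : Matrix (Fin n) (Fin n) ℝ) :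
    Set.MapsTo (sandwich M) (accretiveCone (Fin n)) (accretiveCone (Fin n)) := fun X hX =>
  mem_accretiveCone.2 fun x => quadFormEval_sandwich M X x ▸ mem_accretiveCone.1 hX _

theorem isAdjointPair_sandwich (M : Matrix (Fin n) (Fin n) ℝ) :
    LinearMap.IsAdjointPair (frobeniusForm (Fin n)) (frobeniusForm (Fin n))
      (sandwich M) (sandwich Mᵀ) := fun X Y => by
  change ((sandwich M X)ᵀ * Y).trace = (Xᵀ * sandwich Mᵀ Y).trace
  simp only [sandwich_apply, transpose_mul, transpose_transpose, Matrix.mul_assoc]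
  rw [trace_mul_comm]
  simp only [Matrix.mul_assoc]

end Sandwich

section ClosedLoop

variable {n m p q : ℕ}
  (A : Matrix (Fin n) (Fin n) ℝ) (A' : Fin p → Matrix (Fin n) (Fin n) ℝ)
  (B : Matrix (Fin n) (Fin m) ℝ) (B' : Fin q → Matrix (Fin n) (Fin m) ℝ)
  (al : Fin p → ℝ) (be : Fin q → ℝ) (L : Matrix (Fin m) (Fin n) ℝ)

theorem isAdjointPair_calT_calTstar :
    LinearMap.IsAdjointPair (frobeniusForm (Fin n)) (frobeniusForm (Fin n))
      (calT A A' B B' al be L) (calTstar A A' B B' al be L) := fun X Y => by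
  simp only [calT, calTstar, LinearMap.add_apply, LinearMap.sum_apply, LinearMap.smul_apply,
    map_add, map_sum, map_smul, isAdjointPair_sandwich _ X Y]

theorem calTstar_transpose_apply (X : Matrix (Fin n) (Fin n) ℝ) :
    calTstar A A' B B' al be L Xᵀ = (calTstar A A' B B' al be L X)ᵀ := by
  simp only [calTstar, LinearMap.add_apply, LinearMap.sum_apply, LinearMap.smul_apply,
    sandwich_transpose_apply, transpose_add, transpose_sum, transpose_smul]

variable {al be} in
theorem mapsTo_calTstar_accretiveCone (hal : ∀ i, 0 ≤ al i) (hbe : ∀ j, 0 ≤ be j) :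
    Set.MapsTo (calTstar A A' B B' al be L) (accretiveCone (Fin n)) (accretiveCone (Fin n)) := by
  intro X hX
  simp only [calTstar, LinearMap.add_apply, LinearMap.sum_apply, LinearMap.smul_apply]
  have hmem (M : Matrix (Fin n) (Fin n) ℝ) : sandwich M X ∈ accretiveCone (Fin n) :=
    mapsTo_sandwich_accretiveCone M hX
  exact add_mem (add_mem (hmem _) (sum_mem fun i _ => ProperCone.smul_mem _ (hmem _) (hal i)))
    (sum_mem fun j _ => ProperCone.smul_mem _ (hmem _) (hbe j))

variable {A A' B B' al be L} in
theorem isUnit_one_sub_smul_calTstar (hadm : Admissible A A' B B' al be L) {s : ℝ}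
    (hs : s ∈ Set.Icc (0 : ℝ) 1) : IsUnit (1 - s • calTstar A A' B B' al be L) := by
  have hnorm : ‖s‖ ≤ 1 := (Real.norm_of_nonneg hs.1).trans_le hs.2
  have hadj : LinearMap.IsAdjointPair (frobeniusForm (Fin n)) (frobeniusForm (Fin n))
      (1 - s • calT A A' B B' al be L : Module.End ℝ _)
      (1 - s • calTstar A A' B B' al be L : Module.End ℝ _) :=
    LinearMap.isAdjointPair_one.sub ((isAdjointPair_calT_calTstar A A' B B' al be L).smul s)
  exact isUnit_of_isAdjointPair (separatingRight_frobeniusForm (Fin n)) hadj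
    (isUnit_one_sub_smul_of_spectralRadius_lt_one hadm hnorm)

end ClosedLoop

theorem stmt2_general {n m p q : ℕ}
    (A : Matrix (Fin n) (Fin n) ℝ) (A' : Fin p → Matrix (Fin n) (Fin n) ℝ)
    (B : Matrix (Fin n) (Fin m) ℝ) (B' : Fin q → Matrix (Fin n) (Fin m) ℝ)
    (al : Fin p → ℝ) (be : Fin q → ℝ) (hal : ∀ i, 0 ≤ al i) (hbe : ∀ j, 0 ≤ be j)
    (L : Matrix (Fin m) (Fin n) ℝ) (hadm : Admissible A A' B B' al be L)
    (C : Matrix (Fin n) (Fin n) ℝ) (hC : C.PosSemidef) :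
    ∃ P : Matrix (Fin n) (Fin n) ℝ,
      P = calTstar A A' B B' al be L P + C ∧
      (∀ P' : Matrix (Fin n) (Fin n) ℝ, P' = calTstar A A' B B' al be L P' + C → P' = P) ∧
      P.PosSemidef ∧
      HasSum (fun t : ℕ => ((calTstar A A' B B' al be L) ^ t) C) P := by
  have hcone := mapsTo_calTstar_accretiveCone A A' B B' L hal hbe
  have hsymm := calTstar_transpose_apply A A' B B' al be L
  have hunit (s : ℝ) (hs : s ∈ Set.Icc (0 : ℝ) 1) := isUnit_one_sub_smul_calTstar hadm hs
  have hunit_one : IsUnit (1 - calTstar A A' B B' al be L) := by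
    simpa only [one_smul] using hunit 1 (by simp)
  obtain ⟨P, hP, hP_unique⟩ := existsUnique_eq_apply_add hunit_one C
  exact ⟨P, hP, hP_unique, posSemidef_of_eq_apply_add hcone hsymm hunit hP hC,
    hasSum_pow_apply_of_eq_apply_add hcone hsymm hunit hP hC⟩

theorem stmt2 {n m p q : ℕ} (hn : 0 < n) (hm : 0 < m)
    (A : Matrix (Fin n) (Fin n) ℝ) (A' : Fin p → Matrix (Fin n) (Fin n) ℝ)
    (B : Matrix (Fin n) (Fin m) ℝ) (B' : Fin q → Matrix (Fin n) (Fin m) ℝ)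
    (al : Fin p → ℝ) (be : Fin q → ℝ) (hal : ∀ i, 0 ≤ al i) (hbe : ∀ j, 0 ≤ be j)
    (Q : Matrix (Fin n) (Fin n) ℝ) (hQ : Q.PosSemidef)
    (R : Matrix (Fin m) (Fin m) ℝ) (hR : R.PosDef)
    (L : Matrix (Fin m) (Fin n) ℝ)
    (hadm : Admissible A A' B B' al be L) :
    ∃ P : Matrix (Fin n) (Fin n) ℝ,
      P = calTstar A A' B B' al be L P + Q + Lᵀ * R * L ∧
      (∀ P' : Matrix (Fin n) (Fin n) ℝ,
        P' = calTstar A A' B B' al be L P' + Q + Lᵀ * R * L → P' = P) ∧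
      P.PosSemidef ∧
      HasSum (fun t : ℕ => ((calTstar A A' B B' al be L) ^ t) (Q + Lᵀ * R * L)) P := by
  simpa only [add_assoc] using stmt2_general A A' B B' al be hal hbe L hadm (Q + Lᵀ * R * L)
    (hQ.add (hR.posSemidef.conjTranspose_mul_mul_same L))
end

section
/- Let P* be a symmetric positive semidefinite n×n matrix solving the stochastic algebraic Riccati equation, and let L* = −(R + Bᵀ P* B + Σ_{j=1}^q β̄_j B_jᵀ P* B_j)^{-1} Bᵀ P* A be its associated gain. Then P* satisfies the stochastic Lyapunov equation for L*: P* = 𝒯_{L*}^*(P*) + Q + (L*)ᵀ R L*. -/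
/-!
For every gain `L` the right-hand side of the Lyapunov equation is a quadratic polynomial in `L`
with leading coefficient `M = R + Bᵀ P B + ∑ⱼ β̄ⱼ Bⱼᵀ P Bⱼ`, which is positive definite and hence
invertible. Completing the square, it equals the right-hand side of the Riccati equation plus
`(Lᵀ + Aᵀ P B M⁻¹) M (L + M⁻¹ Bᵀ P A)`, and the last factor vanishes at `L = -M⁻¹ Bᵀ P A`.
-/

open Matrix Filter Topology

section CommRing

variable {n m l k ι κ K : Type*} [Fintype n] [Fintype m] [Fintype ι] [Fintype κ] [CommRing K]

/-- The closed-loop Lyapunov operator `𝒯_L^*(P)` of the system with multiplicative noise, written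
out as a function of `P`, over an arbitrary commutative ring. -/
def lyapunovOperator (A : Matrix n n K) (A' : ι → Matrix n n K) (B : Matrix n m K)
    (B' : κ → Matrix n m K) (al : ι → K) (be : κ → K) (L : Matrix m n K) (P : Matrix n n K) :
    Matrix n n K :=
  (A + B * L)ᵀ * P * (A + B * L) + ∑ i, al i • ((A' i)ᵀ * P * A' i) +
    ∑ j, be j • (Lᵀ * (B' j)ᵀ * P * B' j * L)

/-- The effective input weight `R + Bᵀ P B + ∑ⱼ β̄ⱼ Bⱼᵀ P Bⱼ`, which is inverted in the Riccati
equation. -/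
def inputWeight (B : Matrix n m K) (B' : κ → Matrix n m K) (be : κ → K) (R : Matrix m m K)
    (P : Matrix n n K) : Matrix m m K :=
  R + Bᵀ * P * B + ∑ j, be j • ((B' j)ᵀ * P * B' j)

/-- The feedback gain associated with `P`, which is `L*` when `P` solves the Riccati equation.
It is `0` when the input weight is singular. -/
noncomputable def riccatiGain [DecidableEq m] (A : Matrix n n K) (B : Matrix n m K)
    (B' : κ → Matrix n m K) (be : κ → K) (R : Matrix m m K) (P : Matrix n n K) : Matrix m n K :=
  -(inputWeight B B' be R P)⁻¹ * (Bᵀ * P * A)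

/-- The right-hand side of the stochastic algebraic Riccati equation, whose solutions are the fixed
points of this map in `P`. -/
noncomputable def riccatiMap [DecidableEq m] (A : Matrix n n K) (A' : ι → Matrix n n K)
    (B : Matrix n m K) (B' : κ → Matrix n m K) (al : ι → K) (be : κ → K) (Q : Matrix n n K)
    (R : Matrix m m K) (P : Matrix n n K) : Matrix n n K :=
  Q + Aᵀ * P * A + (∑ i, al i • ((A' i)ᵀ * P * A' i)) -
    Aᵀ * P * B * (inputWeight B B' be R P)⁻¹ * (Bᵀ * P * A)

theorem add_mul_inv_mul_mul_add_inv_mul [DecidableEq m] {M : Matrix m m K} (hM : IsUnit M)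
    (X Y : Matrix l m K) (Z W : Matrix m k K) :
    (X + Y * M⁻¹) * M * (Z + M⁻¹ * W) = X * M * Z + X * W + Y * Z + Y * M⁻¹ * W := by
  have hdet : IsUnit M.det := (isUnit_iff_isUnit_det M).mp hM
  calc (X + Y * M⁻¹) * M * (Z + M⁻¹ * W)
      = (X * M + Y) * (Z + M⁻¹ * W) := by
        rw [Matrix.add_mul, nonsing_inv_mul_cancel_right _ _ hdet]
    _ = X * M * Z + Y * Z + (X * W + Y * M⁻¹ * W) := by
        rw [Matrix.mul_add, Matrix.add_mul, Matrix.add_mul, ← Matrix.mul_assoc (X * M),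
          mul_nonsing_inv_cancel_right _ _ hdet, Matrix.mul_assoc Y]
    _ = X * M * Z + X * W + Y * Z + Y * M⁻¹ * W := by abel

variable (A : Matrix n n K) (A' : ι → Matrix n n K) (B : Matrix n m K) (B' : κ → Matrix n m K)
  (al : ι → K) (be : κ → K) (Q : Matrix n n K) (R : Matrix m m K) (L : Matrix m n K)
  (P : Matrix n n K)

theorem lyapunovOperator_add_add_eq_quadratic :
    lyapunovOperator A A' B B' al be L P + Q + Lᵀ * R * L =
      Q + Aᵀ * P * A + (∑ i, al i • ((A' i)ᵀ * P * A' i)) +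
        (Lᵀ * inputWeight B B' be R P * L + Lᵀ * (Bᵀ * P * A) + Aᵀ * P * B * L) := by
  simp only [lyapunovOperator, inputWeight, transpose_add, transpose_mul, Matrix.add_mul,
    Matrix.mul_add, Matrix.mul_sum, Matrix.sum_mul, Matrix.mul_smul, Matrix.smul_mul,
    Matrix.mul_assoc]
  abel

variable {B B' be R P}

theorem lyapunovOperator_add_add_eq_riccatiMap_add [DecidableEq m]
    (hM : IsUnit (inputWeight B B' be R P)) :
    lyapunovOperator A A' B B' al be L P + Q + Lᵀ * R * L =
      riccatiMap A A' B B' al be Q R P +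
        (Lᵀ + Aᵀ * P * B * (inputWeight B B' be R P)⁻¹) * inputWeight B B' be R P *
          (L - riccatiGain A B B' be R P) := by
  rw [lyapunovOperator_add_add_eq_quadratic, riccatiGain, Matrix.neg_mul, sub_neg_eq_add,
    add_mul_inv_mul_mul_add_inv_mul hM, riccatiMap]
  abel

theorem lyapunovOperator_riccatiGain_add_add_eq_riccatiMap [DecidableEq m]
    (hM : IsUnit (inputWeight B B' be R P)) :
    lyapunovOperator A A' B B' al be (riccatiGain A B B' be R P) P + Q +
        (riccatiGain A B B' be R P)ᵀ * R * riccatiGain A B B' be R P =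
      riccatiMap A A' B B' al be Q R P := by
  rw [lyapunovOperator_add_add_eq_riccatiMap_add A A' al Q _ hM, sub_self, Matrix.mul_zero,
    add_zero]

theorem stmt9_general [DecidableEq m] (hM : IsUnit (inputWeight B B' be R P)) :
    P = riccatiMap A A' B B' al be Q R P ↔
      P = lyapunovOperator A A' B B' al be (riccatiGain A B B' be R P) P + Q +
        (riccatiGain A B B' be R P)ᵀ * R * riccatiGain A B B' be R P := by
  rw [lyapunovOperator_riccatiGain_add_add_eq_riccatiMap A A' al Q hM]

end CommRing

section PosDef

variable {n m κ K : Type*} [Fintype n] [Finite m] [Fintype κ] [CommRing K] [PartialOrder K]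
  [StarRing K] [TrivialStar K]

theorem posSemidef_transpose_mul_mul_same {P : Matrix n n K} (hP : P.PosSemidef)
    (B : Matrix n m K) : (Bᵀ * P * B).PosSemidef := by
  simpa only [conjTranspose_eq_transpose_of_trivial] using hP.conjTranspose_mul_mul_same B

theorem posDef_inputWeight [StarOrderedRing K] {be : κ → K} {R : Matrix m m K}
    {P : Matrix n n K} (hR : R.PosDef) (hP : P.PosSemidef) (hbe : ∀ j, 0 ≤ be j)
    (B : Matrix n m K) (B' : κ → Matrix n m K) : (inputWeight B B' be R P).PosDef :=
  (hR.add_posSemidef (posSemidef_transpose_mul_mul_same hP B)).add_posSemidef <|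
    posSemidef_sum _ fun j _ => (posSemidef_transpose_mul_mul_same hP (B' j)).smul (hbe j)

end PosDef

theorem calTstar_apply {n m p q : ℕ} (A : Matrix (Fin n) (Fin n) ℝ)
    (A' : Fin p → Matrix (Fin n) (Fin n) ℝ) (B : Matrix (Fin n) (Fin m) ℝ)
    (B' : Fin q → Matrix (Fin n) (Fin m) ℝ) (al : Fin p → ℝ) (be : Fin q → ℝ)
    (L : Matrix (Fin m) (Fin n) ℝ) (P : Matrix (Fin n) (Fin n) ℝ) :
    calTstar A A' B B' al be L P = lyapunovOperator A A' B B' al be L P := by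
  simp only [calTstar, sandwich, lyapunovOperator, LinearMap.add_apply, LinearMap.sum_apply,
    LinearMap.smul_apply, LinearMap.comp_apply, LinearMap.mulLeft_apply,
    LinearMap.mulRight_apply, transpose_transpose, transpose_mul, Matrix.mul_assoc]

theorem stmt9 {n m p q : ℕ} (hn : 0 < n) (hm : 0 < m)
    (A : Matrix (Fin n) (Fin n) ℝ) (A' : Fin p → Matrix (Fin n) (Fin n) ℝ)
    (B : Matrix (Fin n) (Fin m) ℝ) (B' : Fin q → Matrix (Fin n) (Fin m) ℝ)
    (al : Fin p → ℝ) (be : Fin q → ℝ) (hal : ∀ i, 0 ≤ al i) (hbe : ∀ j, 0 ≤ be j)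
    (Q : Matrix (Fin n) (Fin n) ℝ) (hQ : Q.PosSemidef)
    (R : Matrix (Fin m) (Fin m) ℝ) (hR : R.PosDef)
    (Pstar : Matrix (Fin n) (Fin n) ℝ) (hPstar : Pstar.PosSemidef)
    (hSARE : Pstar = Q + Aᵀ * Pstar * A + (∑ i, al i • ((A' i)ᵀ * Pstar * A' i)) -
      Aᵀ * Pstar * B *
        (R + Bᵀ * Pstar * B + ∑ j, be j • ((B' j)ᵀ * Pstar * B' j))⁻¹ *
        (Bᵀ * Pstar * A))
    (Lstar : Matrix (Fin m) (Fin n) ℝ)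
    (hLstar : Lstar =
      -(R + Bᵀ * Pstar * B + ∑ j, be j • ((B' j)ᵀ * Pstar * B' j))⁻¹ * (Bᵀ * Pstar * A)) :
    Pstar = calTstar A A' B B' al be Lstar Pstar + Q + Lstarᵀ * R * Lstar := by
  rw [hLstar, calTstar_apply]
  exact (stmt9_general A A' al Q (posDef_inputWeight hR hPstar hbe B B').isUnit).mp hSARE
end
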